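/- arXiv:2404.06388 — 10 statements merged into one kernel-verified Lean document; each statement's English description precedes it below -/
import Mathlib

section
/- A pair of matrices A, B in SL(2,ℂ) shares a common eigenvector (i.e., there exists a nonzero vector v ∈ ℂ² and scalars a, b ∈ ℂ with Av = a·v and Bv = b·v) if and only if tr(ABA⁻¹B⁻¹) = 2. -/
open Matrix

/-- The trace of an element of `SL(2, ℂ)`, viewed as a matrix. -/
noncomputable def tr (A : Matrix.SpecialLinearGroup (Fin 2) ℂ) : ℂ :=
  Matrix.trace (A : Matrix (Fin 2) (Fin 2) ℂ)

/-- Two elements of `SL(2, ℂ)` share a common eigenvector. -/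
def SharesEigenvector (A B : Matrix.SpecialLinearGroup (Fin 2) ℂ) : Prop :=
  ∃ v : Fin 2 → ℂ, v ≠ 0 ∧ ∃ a b : ℂ,
    (A : Matrix (Fin 2) (Fin 2) ℂ).mulVec v = a • v ∧
    (B : Matrix (Fin 2) (Fin 2) ℂ).mulVec v = b • v


theorem aux_root (p q r : ℂ) : ∃ x y : ℂ, (x ≠ 0 ∨ y ≠ 0) ∧ p*x^2+q*(x*y)+r*y^2 = 0 := by
  by_cases hp : p = 0
  · exact ⟨1, 0, by simp, by simp [hp]⟩
  · obtain ⟨s, hs⟩ := IsAlgClosed.exists_pow_nat_eq (discrim p q r) (n := 2) (by norm_num)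
    obtain ⟨x, hx⟩ := exists_quadratic_eq_zero hp ⟨s, by rw [← hs]; ring⟩
    exact ⟨x, 1, by simp, by linear_combination hx⟩

theorem aux_res (p0 p1 p2 q0 q1 q2 : ℂ) :
    (∃ x y : ℂ, (x ≠ 0 ∨ y ≠ 0) ∧ p0*x^2+p1*(x*y)+p2*y^2 = 0 ∧ q0*x^2+q1*(x*y)+q2*y^2 = 0) ↔
    (p0*q2-p2*q0)^2 - (p0*q1-p1*q0)*(p1*q2-p2*q1) = 0 := by
  constructor
  · rintro ⟨x, y, hxy, hP, hQ⟩
    by_cases hy : y = 0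
    · subst hy
      have hx : x ≠ 0 := by simpa using hxy
      have h1 : p0 = 0 := by simpa [hx] using hP
      have h2 : q0 = 0 := by simpa [hx] using hQ
      simp [h1, h2]
    by_cases hx : x = 0
    · subst hx
      have h1 : p2 = 0 := by simpa [hy] using hP
      have h2 : q2 = 0 := by simpa [hy] using hQ
      simp [h1, h2]
    have e1 : (p0*q1-p1*q0)*x + (p0*q2-p2*q0)*y = 0 := by
      apply mul_left_cancel₀ hy
      linear_combination p0*hQ - q0*hP
    have e2 : (p0*q2-p2*q0)*x + (p1*q2-p2*q1)*y = 0 := by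
      apply mul_left_cancel₀ hx
      linear_combination q2*hP - p2*hQ
    apply mul_left_cancel₀ hx
    linear_combination (p0*q2-p2*q0)*e2 - (p1*q2-p2*q1)*e1
  · intro h
    by_cases hu : p0*q1-p1*q0 = 0
    · have hw : p0*q2-p2*q0 = 0 := by
        rw [hu] at h
        simpa using h
      by_cases ht : p1*q2-p2*q1 = 0
      · by_cases hp : p0 = 0 ∧ p1 = 0 ∧ p2 = 0
        · obtain ⟨rfl, rfl, rfl⟩ := hp
          obtain ⟨x, y, h1, h2⟩ := aux_root q0 q1 q2
          exact ⟨x, y, h1, by simp, h2⟩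
        · obtain ⟨x, y, h1, h2⟩ := aux_root p0 p1 p2
          refine ⟨x, y, h1, h2, ?_⟩
          by_cases h0 : p0 = 0
          · by_cases h3 : p1 = 0
            · have h4 : p2 ≠ 0 := fun h => hp ⟨h0, h3, h⟩
              apply mul_left_cancel₀ h4
              linear_combination q2*h2 - x^2*hw - x*y*ht
            · apply mul_left_cancel₀ h3
              linear_combination q1*h2 - x^2*hu + y^2*ht
          · apply mul_left_cancel₀ h0
            linear_combination q0*h2 + x*y*hu + y^2*hw
      · refine ⟨1, 0, by simp, ?_, ?_⟩
        · apply mul_left_cancel₀ ht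
          linear_combination p1*hw - p2*hu
        · apply mul_left_cancel₀ ht
          linear_combination q1*hw - q2*hu
    · refine ⟨-(p0*q2-p2*q0), p0*q1-p1*q0, Or.inr hu, ?_, ?_⟩
      · linear_combination p0*h
      · linear_combination q0*h

theorem aux_eig (M : Matrix (Fin 2) (Fin 2) ℂ) (v : Fin 2 → ℂ) (hv : v 0 ≠ 0 ∨ v 1 ≠ 0) :
    (∃ a : ℂ, M.mulVec v = a • v) ↔
    M 1 0 * v 0^2 + (M 1 1 - M 0 0) * (v 0 * v 1) + (-M 0 1) * v 1^2 = 0 := by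
  have key : ∀ a : ℂ, M.mulVec v = a • v ↔
      (M 0 0 * v 0 + M 0 1 * v 1 = a * v 0 ∧ M 1 0 * v 0 + M 1 1 * v 1 = a * v 1) := by
    intro a
    rw [funext_iff, Fin.forall_fin_two]
    simp [Matrix.mulVec, dotProduct, Fin.sum_univ_two]
  simp only [key]
  constructor
  · rintro ⟨a, h1, h2⟩
    linear_combination v 0 * h2 - v 1 * h1
  · intro h
    rcases hv with hv | hv
    · refine ⟨(M 0 0 * v 0 + M 0 1 * v 1) / v 0, ?_, ?_⟩
      · field_simp
      · field_simp
        linear_combination h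
    · refine ⟨(M 1 0 * v 0 + M 1 1 * v 1) / v 1, ?_, ?_⟩
      · field_simp
        linear_combination -h
      · field_simp

theorem sharesEigenvector_iff_trace_commutator_eq_two
    (A B : Matrix.SpecialLinearGroup (Fin 2) ℂ) :
    SharesEigenvector A B ↔ tr (A * B * A⁻¹ * B⁻¹) = 2 := by
  have h1 : SharesEigenvector A B ↔ ∃ x y : ℂ, (x ≠ 0 ∨ y ≠ 0) ∧
      A.1 1 0*x^2+(A.1 1 1 - A.1 0 0)*(x*y)+(-A.1 0 1)*y^2 = 0 ∧
      B.1 1 0*x^2+(B.1 1 1 - B.1 0 0)*(x*y)+(-B.1 0 1)*y^2 = 0 := by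
    constructor
    · rintro ⟨v, hv, a, b, ha, hb⟩
      have hv' : v 0 ≠ 0 ∨ v 1 ≠ 0 := by
        by_contra hc
        push Not at hc
        exact hv (funext fun i => by fin_cases i <;> simp [hc])
      exact ⟨v 0, v 1, hv', (aux_eig A.1 v hv').1 ⟨a, ha⟩, (aux_eig B.1 v hv').1 ⟨b, hb⟩⟩
    · rintro ⟨x, y, hxy, hP, hQ⟩
      obtain ⟨a, ha⟩ := (aux_eig A.1 ![x, y] (by simpa using hxy)).2 (by simpa using hP)
      obtain ⟨b, hb⟩ := (aux_eig B.1 ![x, y] (by simpa using hxy)).2 (by simpa using hQ)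
      refine ⟨![x, y], ?_, a, b, ha, hb⟩
      intro h0
      have e0 := congrFun h0 0
      have e1 := congrFun h0 1
      simp at e0 e1
      simp [e0, e1] at hxy
  rw [h1, aux_res, ← sub_eq_zero (b := (2 : ℂ))]
  have hA := A.2
  have hB := B.2
  rw [Matrix.det_fin_two] at hA hB
  have ht : tr (A * B * A⁻¹ * B⁻¹) =
      (A.1 * B.1 * A.1.adjugate * B.1.adjugate).trace := by
    simp [tr, Matrix.SpecialLinearGroup.coe_inv]
  rw [ht, Matrix.adjugate_fin_two, Matrix.adjugate_fin_two, Matrix.trace_fin_two]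
  simp only [Matrix.mul_apply, Fin.sum_univ_two, Matrix.of_apply, Matrix.cons_val', Matrix.cons_val_zero,
    Matrix.cons_val_one, Matrix.cons_val_fin_one]
  generalize A.1 0 0 = a at *
  generalize A.1 0 1 = b at *
  generalize A.1 1 0 = c at *
  generalize A.1 1 1 = d at *
  generalize B.1 0 0 = e at *
  generalize B.1 0 1 = f at *
  generalize B.1 1 0 = g at *
  generalize B.1 1 1 = h at *
  apply Eq.congr_left
  linear_combination (-2 * (e * h - f * g)) * hA - 2 * hB
end

section
/- Let A, B ∈ SL(2,ℂ) satisfy A²B² = I, and suppose the pair (A, B) is irreducible (A and B have no common eigenvector in ℂ²). Then tr(A) = 0 and tr(B) = 0. -/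
open Matrix

/-- Cayley-Hamilton consequence of the relation: `tr(A) A = tr(B) (tr(B) I - B)`. -/
theorem klein_key (A B : Matrix.SpecialLinearGroup (Fin 2) ℂ) (hrel : A ^ 2 * B ^ 2 = 1) :
    tr A • (A : Matrix (Fin 2) (Fin 2) ℂ) =
      tr B • (tr B • (1 : Matrix (Fin 2) (Fin 2) ℂ) - (B : Matrix (Fin 2) (Fin 2) ℂ)) := by
  have h1 : A ^ 2 = B⁻¹ ^ 2 := by
    rw [inv_pow]; exact eq_inv_of_mul_eq_one_left hrel
  have h2 := congrArg (fun M : Matrix.SpecialLinearGroup (Fin 2) ℂ =>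
    (M : Matrix (Fin 2) (Fin 2) ℂ)) h1
  have hA := A.det_coe
  have hB := B.det_coe
  rw [Matrix.det_fin_two] at hA hB
  have e := fun i j => congrFun (congrFun h2 i) j
  have e00 := e 0 0
  have e01 := e 0 1
  have e10 := e 1 0
  have e11 := e 1 1
  simp [pow_two, Matrix.mul_apply, Fin.sum_univ_two, Matrix.SpecialLinearGroup.coe_inv,
    Matrix.adjugate_fin_two] at e00 e01 e10 e11
  ext i j
  fin_cases i <;> fin_cases j <;>
    simp [tr, Matrix.trace_fin_two]
  · linear_combination e00 + hA - hB
  · linear_combination e01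
  · linear_combination e10
  · linear_combination e11 + hA - hB

/-- If `A²B² = I` in `SL(2, ℂ)` and the pair `(A, B)` is irreducible,
then `tr(A) = 0` and `tr(B) = 0`. -/
theorem irreducible_klein_traces_eq_zero
    (A B : Matrix.SpecialLinearGroup (Fin 2) ℂ)
    (hrel : A ^ 2 * B ^ 2 = 1) (hirr : ¬ SharesEigenvector A B) :
    tr A = 0 ∧ tr B = 0 := by
  have key := klein_key A B hrel
  by_cases hA : tr A = 0
  · refine ⟨hA, ?_⟩
    by_contra hB
    rw [hA, zero_smul] at key
    have h0 := (smul_eq_zero.mp key.symm).resolve_left hB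
    have h00 := congrFun (congrFun h0 0) 0
    have h01 := congrFun (congrFun h0 0) 1
    have h11 := congrFun (congrFun h0 1) 1
    have hd := B.det_coe
    rw [Matrix.det_fin_two] at hd
    simp [tr, Matrix.trace_fin_two] at h00 h01 h11
    simp [h00, h01, h11] at hd
  · exfalso
    apply hirr
    obtain ⟨b, hb⟩ := Module.End.exists_eigenvalue
      (Matrix.toLin' (B : Matrix (Fin 2) (Fin 2) ℂ))
    obtain ⟨v, hv⟩ := hb.exists_hasEigenvector
    have hBv : (B : Matrix (Fin 2) (Fin 2) ℂ).mulVec v = b • v := by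
      simpa using hv.apply_eq_smul
    refine ⟨v, hv.2, (tr A)⁻¹ * (tr B * (tr B - b)), b, ?_, hBv⟩
    have h := congrArg (fun M : Matrix (Fin 2) (Fin 2) ℂ => M.mulVec v) key
    simp only [Matrix.smul_mulVec, Matrix.sub_mulVec, Matrix.one_mulVec, hBv] at h
    rw [mul_smul, mul_smul, sub_smul, ← h, smul_smul, inv_mul_cancel₀ hA, one_smul]
end

section
/- Let A, B ∈ SL(2,ℂ) satisfy A²B² = I, and suppose the pair (A, B) is irreducible (A and B have no common eigenvector in ℂ²). Then A² = −I and B² = −I. -/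
open Matrix

/-- If `A²B² = I` in `SL(2, ℂ)` and the pair `(A, B)` is irreducible,
then `A² = −I` and `B² = −I`. -/
theorem irreducible_klein_squares_eq_neg_one
    (A B : Matrix.SpecialLinearGroup (Fin 2) ℂ)
    (hrel : A ^ 2 * B ^ 2 = 1) (hirr : ¬ SharesEigenvector A B) :
    ((A ^ 2 : Matrix.SpecialLinearGroup (Fin 2) ℂ) : Matrix (Fin 2) (Fin 2) ℂ) = -1 ∧
    ((B ^ 2 : Matrix.SpecialLinearGroup (Fin 2) ℂ) : Matrix (Fin 2) (Fin 2) ℂ) = -1 := by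
  have hinv : A ^ 2 = (B ^ 2)⁻¹ := eq_inv_of_mul_eq_one_left hrel
  have hdA : (A : Matrix (Fin 2) (Fin 2) ℂ).det = 1 := A.2
  have hdB : (B : Matrix (Fin 2) (Fin 2) ℂ).det = 1 := B.2
  have hm := congrArg (fun X : Matrix.SpecialLinearGroup (Fin 2) ℂ =>
    (X : Matrix (Fin 2) (Fin 2) ℂ)) hinv
  have hr := congrArg (fun X : Matrix.SpecialLinearGroup (Fin 2) ℂ =>
    (X : Matrix (Fin 2) (Fin 2) ℂ)) hrel
  simp only [Matrix.SpecialLinearGroup.coe_inv, Matrix.SpecialLinearGroup.coe_pow,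
    Matrix.SpecialLinearGroup.coe_mul, Matrix.SpecialLinearGroup.coe_one] at hm hr ⊢
  unfold SharesEigenvector at hirr
  generalize (A : Matrix (Fin 2) (Fin 2) ℂ) = M at *
  generalize (B : Matrix (Fin 2) (Fin 2) ℂ) = N at *
  -- Cayley-Hamilton for `M`
  have hM : M ^ 2 = M.trace • M - 1 := by
    rw [Matrix.det_fin_two] at hdA
    ext i j
    fin_cases i <;> fin_cases j <;>
      simp [pow_two, Matrix.mul_apply, Fin.sum_univ_two, Matrix.trace_fin_two] <;> grind
  have hN : (N ^ 2).adjugate = (N.trace ^ 2 - 1) • (1 : Matrix (Fin 2) (Fin 2) ℂ)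
      - N.trace • N := by
    rw [Matrix.det_fin_two] at hdB
    rw [Matrix.adjugate_fin_two]
    ext i j
    fin_cases i <;> fin_cases j <;>
      simp [pow_two, Matrix.mul_apply, Fin.sum_univ_two, Matrix.trace_fin_two] <;> grind
  by_cases hx : M.trace = 0
  · have h1 : M ^ 2 = -1 := by rw [hM, hx]; simp
    refine ⟨h1, ?_⟩
    rw [h1] at hr
    rw [neg_mul, one_mul] at hr
    rw [← hr, neg_neg]
  · exfalso
    apply hirr
    obtain ⟨b, hb⟩ := Module.End.exists_eigenvalue (Matrix.toLin' N)
    obtain ⟨v, hv⟩ := hb.exists_hasEigenvector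
    have hNv : N.mulVec v = b • v := by simpa using hv.apply_eq_smul
    refine ⟨v, hv.2, (N.trace ^ 2 - N.trace * b) / M.trace, b, ?_, hNv⟩
    have h2 : M.trace • M = (N.trace ^ 2) • (1 : Matrix (Fin 2) (Fin 2) ℂ) - N.trace • N := by
      have h3 : M.trace • M - 1 = (N.trace ^ 2 - 1) • (1 : Matrix (Fin 2) (Fin 2) ℂ)
        - N.trace • N := by rw [← hM, hm, hN]
      rw [sub_smul, one_smul] at h3
      rw [sub_eq_iff_eq_add.mp h3]
      abel
    have h4 : M.trace • M.mulVec v = (N.trace ^ 2 - N.trace * b) • v := by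
      rw [← Matrix.smul_mulVec, h2, Matrix.sub_mulVec, Matrix.smul_mulVec, Matrix.smul_mulVec,
        Matrix.one_mulVec, hNv, smul_smul, sub_smul]
    rw [div_eq_inv_mul, ← smul_smul, ← h4, smul_smul, inv_mul_cancel₀ hx, one_smul]
end

section
/- Let A, B ∈ SL(2,ℂ) satisfy A²B² = I, and suppose the pair (A, B) is irreducible (A and B have no common eigenvector in ℂ²). Then there exist a sign ε ∈ {1, −1}, a complex number r with r ≠ 0 and r ≠ 4, and an invertible 2×2 complex matrix P, such that PAP⁻¹ equals the matrix with rows (εi, 1) and (0, −εi), and PBP⁻¹ equals the matrix with rows (εi, 0) and (r, −εi). Moreover, tr(AB) = r − 2. -/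
open Matrix Complex

theorem mat_eq {a b c d a' b' c' d' : ℂ} (h1 : a = a') (h2 : b = b') (h3 : c = c')
    (h4 : d = d') : !![a, b; c, d] = !![a', b'; c', d'] := by
  rw [h1, h2, h3, h4]

/-- Normal form for the irreducible representations of the Klein bottle group:
if `A²B² = I` and `(A, B)` is irreducible, then up to conjugation
`A = [[εi, 1], [0, −εi]]` and `B = [[εi, 0], [r, −εi]]` with `ε = ±1`,
`r ≠ 0`, `r ≠ 4`, and `tr(AB) = r − 2`. -/
theorem irreducible_klein_normal_form
    (A B : Matrix.SpecialLinearGroup (Fin 2) ℂ)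
    (hrel : A ^ 2 * B ^ 2 = 1) (hirr : ¬ SharesEigenvector A B) :
    ∃ ε : ℂ, (ε = 1 ∨ ε = -1) ∧ ∃ r : ℂ, r ≠ 0 ∧ r ≠ 4 ∧
      (∃ P : Matrix (Fin 2) (Fin 2) ℂ, IsUnit P ∧
        P * (A : Matrix (Fin 2) (Fin 2) ℂ) * P⁻¹ =
          !![ε * Complex.I, 1; 0, -(ε * Complex.I)] ∧
        P * (B : Matrix (Fin 2) (Fin 2) ℂ) * P⁻¹ =
          !![ε * Complex.I, 0; r, -(ε * Complex.I)]) ∧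
      tr (A * B) = r - 2 := by
  have hm0 : (A : Matrix (Fin 2) (Fin 2) ℂ) ^ 2 * (B : Matrix (Fin 2) (Fin 2) ℂ) ^ 2 = 1 := by
    rw [← Matrix.SpecialLinearGroup.coe_pow, ← Matrix.SpecialLinearGroup.coe_pow,
      ← Matrix.SpecialLinearGroup.coe_mul, hrel, Matrix.SpecialLinearGroup.coe_one]
  obtain ⟨A, hA⟩ := A
  obtain ⟨B, hB⟩ := B
  obtain ⟨a, b, c, d, rfl⟩ : ∃ a b c d, A = !![a, b; c, d] :=
    ⟨_, _, _, _, Matrix.eta_fin_two A⟩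
  obtain ⟨e, f, g, h, rfl⟩ : ∃ a b c d, B = !![a, b; c, d] :=
    ⟨_, _, _, _, Matrix.eta_fin_two B⟩
  have hirr' : ∀ p q x y : ℂ, (p ≠ 0 ∨ q ≠ 0) → a * p + b * q = x * p →
      c * p + d * q = x * q → e * p + f * q = y * p → g * p + h * q = y * q → False := by
    intro p q x y hpq h1 h2 h3 h4
    apply hirr
    refine ⟨![p, q], ?_, x, y, ?_, ?_⟩
    · intro h0
      have e0 := congrFun h0 0
      have e1 := congrFun h0 1
      simp at e0 e1
      tauto
    · ext i; fin_cases i <;> simp [Matrix.mulVec, dotProduct, Fin.sum_univ_two, h1, h2]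
    · ext i; fin_cases i <;> simp [Matrix.mulVec, dotProduct, Fin.sum_univ_two, h3, h4]
  have hm : !![a, b; c, d] ^ 2 * !![e, f; g, h] ^ 2 = 1 := by
    exact hm0
  have hdA : a * d - b * c = 1 := by simpa [Matrix.det_fin_two] using hA
  have hdB : e * h - f * g = 1 := by simpa [Matrix.det_fin_two] using hB
  -- A² = B⁻²; Cayley-Hamilton gives tr A · A = tr B · B⁻¹
  have hm2 : !![a, b; c, d] ^ 2 = !![h, -f; -g, e] ^ 2 := by
    have hinv : !![e, f; g, h] ^ 2 * !![h, -f; -g, e] ^ 2 = 1 := by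
      have h1 : !![e, f; g, h] * !![h, -f; -g, e] = 1 := by
        rw [Matrix.mul_fin_two, Matrix.one_fin_two]
        refine mat_eq ?_ ?_ ?_ ?_
        · linear_combination hdB
        · ring
        · ring
        · linear_combination hdB
      rw [pow_two, pow_two, mul_assoc, ← mul_assoc _ !![h, -f; -g, e], h1, one_mul, h1]
    calc _ = !![a, b; c, d] ^ 2 * (!![e, f; g, h] ^ 2 * !![h, -f; -g, e] ^ 2) := by
          rw [hinv, mul_one]
      _ = _ := by rw [← mul_assoc, hm, one_mul]
  have k00 := congrFun (congrFun hm2 0) 0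
  have k01 := congrFun (congrFun hm2 0) 1
  have k10 := congrFun (congrFun hm2 1) 0
  have k11 := congrFun (congrFun hm2 1) 1
  simp [pow_two, Matrix.mul_apply, Fin.sum_univ_two] at k00 k01 k10 k11
  have m00 : (a + d) * a = (e + h) * h := by linear_combination k00 + hdA - hdB
  have m01 : (a + d) * b = -((e + h) * f) := by linear_combination k01
  have m10 : (a + d) * c = -((e + h) * g) := by linear_combination k10
  have m11 : (a + d) * d = (e + h) * e := by linear_combination k11 + hdA - hdB
  have hex : ∀ e f g h : ℂ, ∀ y, y ^ 2 - (e + h) * y + (e * h - f * g) = 0 →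
      ∃ p q, (p ≠ 0 ∨ q ≠ 0) ∧ e * p + f * q = y * p ∧ g * p + h * q = y * q := by
    intro e f g h y hy
    by_cases h1 : f ≠ 0 ∨ y - e ≠ 0
    · exact ⟨f, y - e, h1, by ring, by linear_combination -hy⟩
    · push Not at h1
      obtain ⟨hf, hye⟩ := h1
      by_cases h2 : y - h ≠ 0 ∨ g ≠ 0
      · exact ⟨y - h, g, h2, by linear_combination -hy, by ring⟩
      · push Not at h2
        refine ⟨1, 0, by simp, by linear_combination -hye, by linear_combination h2.2⟩
  have hI : Complex.I ^ 2 = -1 := Complex.I_sq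
  have htA : a + d = 0 := by
    by_contra hne
    obtain ⟨y, hy⟩ : ∃ y : ℂ, y ^ 2 - (e + h) * y + (e * h - f * g) = 0 := by
      obtain ⟨w, hw⟩ := IsAlgClosed.exists_pow_nat_eq ((e + h) ^ 2 - 4 * (e * h - f * g))
        (n := 2) (by norm_num)
      exact ⟨(e + h + w) / 2, by linear_combination hw / 4⟩
    obtain ⟨p, q, hpq, h1, h2⟩ := hex e f g h y hy
    refine hirr' p q ((e + h) * (e + h - y) / (a + d)) y hpq ?_ ?_ h1 h2
    · field_simp
      linear_combination p * m00 + q * m01 - (e + h) * h1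
    · field_simp
      linear_combination p * m10 + q * m11 - (e + h) * h2
  have htB : e + h = 0 := by
    rw [htA] at m00 m11
    have : (e + h) ^ 2 = 0 := by linear_combination -m00 - m11
    exact pow_eq_zero_iff (by norm_num) |>.1 this
  obtain rfl : d = -a := by linear_combination htA
  obtain rfl : h = -e := by linear_combination htB
  obtain ⟨p, q, hpq, h1, h2⟩ := hex e f g (-e) (-Complex.I) (by linear_combination hI + hdB)
  -- v = (A + i) u
  obtain ⟨s, hs⟩ : ∃ s, s = a * p + b * q + Complex.I * p := ⟨_, rfl⟩
  obtain ⟨t, ht⟩ : ∃ t, t = c * p + -a * q + Complex.I * q := ⟨_, rfl⟩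
  obtain ⟨r, hr⟩ : ∃ r, r = 2 * a * e + b * g + c * f + 2 := ⟨_, rfl⟩
  have hAv1 : a * s + b * t = Complex.I * s := by
    rw [hs, ht]; linear_combination -p * hdA - p * hI
  have hAv2 : c * s + -a * t = Complex.I * t := by
    rw [hs, ht]; linear_combination -q * hdA - q * hI
  have hBv1 : e * s + f * t = Complex.I * s + r * p := by
    rw [hs, ht, hr]; linear_combination (-a + Complex.I) * h1 - b * h2 - 2 * p * hI
  have hBv2 : g * s + -e * t = Complex.I * t + r * q := by
    rw [hs, ht, hr]; linear_combination (a + Complex.I) * h2 - c * h1 - 2 * q * hI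
  have hD : s * q - t * p ≠ 0 := by
    intro hD
    by_cases hp : p = 0
    · have hq : q ≠ 0 := by tauto
      refine hirr' p q (t / q - Complex.I) (-Complex.I) hpq ?_ ?_ h1 h2
      · field_simp
        linear_combination hD - q * hs
      · field_simp
        linear_combination -ht
    · refine hirr' p q (s / p - Complex.I) (-Complex.I) hpq ?_ ?_ h1 h2
      · field_simp
        linear_combination -hs
      · field_simp
        linear_combination -hD - p * ht
  have hst : s ≠ 0 ∨ t ≠ 0 := by
    by_contra hc
    push Not at hc
    apply hD; rw [hc.1, hc.2]; ring
  refine ⟨1, Or.inl rfl, r, ?_, ?_, ⟨!![s, p; t, q]⁻¹, ?_, ?_, ?_⟩, ?_⟩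
  · intro h0
    exact hirr' s t Complex.I Complex.I hst hAv1 hAv2
      (by rw [hBv1, h0]; ring) (by rw [hBv2, h0]; ring)
  · intro h0
    rw [h0] at hBv1 hBv2
    refine hirr' (s - 2 * Complex.I * p) (t - 2 * Complex.I * q) (-Complex.I) Complex.I
      ?_ ?_ ?_ ?_ ?_
    · by_contra hc
      push Not at hc
      apply hD; linear_combination q * hc.1 - p * hc.2
    · linear_combination hAv1 + 2 * Complex.I * hs
    · linear_combination hAv2 + 2 * Complex.I * ht
    · linear_combination hBv1 - 2 * Complex.I * h1 + 4 * p * hI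
    · linear_combination hBv2 - 2 * Complex.I * h2 + 4 * q * hI
  all_goals try
    have hu : IsUnit (!![s, p; t, q] : Matrix (Fin 2) (Fin 2) ℂ).det := by
      rw [Matrix.det_fin_two_of, isUnit_iff_ne_zero]
      intro h0; apply hD; linear_combination h0
  · rw [Matrix.isUnit_nonsing_inv_iff, Matrix.isUnit_iff_isUnit_det]
    exact hu
  · rw [Matrix.nonsing_inv_nonsing_inv _ hu, mul_assoc]
    have : !![a, b; c, -a] * !![s, p; t, q] =
        !![s, p; t, q] * !![1 * Complex.I, 1; 0, -(1 * Complex.I)] := by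
      rw [Matrix.mul_fin_two, Matrix.mul_fin_two]
      refine mat_eq ?_ ?_ ?_ ?_
      · linear_combination hAv1
      · linear_combination -hs
      · linear_combination hAv2
      · linear_combination -ht
    rw [this, Matrix.nonsing_inv_mul_cancel_left _ _ hu]
  · rw [Matrix.nonsing_inv_nonsing_inv _ hu, mul_assoc]
    have : !![e, f; g, -e] * !![s, p; t, q] =
        !![s, p; t, q] * !![1 * Complex.I, 0; r, -(1 * Complex.I)] := by
      rw [Matrix.mul_fin_two, Matrix.mul_fin_two]
      refine mat_eq ?_ ?_ ?_ ?_
      · linear_combination hBv1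
      · linear_combination h1
      · linear_combination hBv2
      · linear_combination h2
    rw [this, Matrix.nonsing_inv_mul_cancel_left _ _ hu]
  · have : tr (⟨!![a, b; c, -a], hA⟩ * ⟨!![e, f; g, -e], hB⟩) =
        Matrix.trace (!![a, b; c, -a] * !![e, f; g, -e]) := rfl
    rw [this, Matrix.mul_fin_two, Matrix.trace_fin_two_of, hr]
    ring
end

section
/- Let A, B ∈ SL(2,ℂ) satisfy A²B² = I. Then tr(A)·tr(B)·tr(AB) − tr(A)² − tr(B)² = 0. -/
open Matrix

/-- The cubic identity at the level of matrices of determinant one. -/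
theorem cubic_of_matrices (M N : Matrix (Fin 2) (Fin 2) ℂ) (hA : M.det = 1) (hB : N.det = 1)
    (h' : M * M = adjugate (N * N)) :
    M.trace * N.trace * (M * N).trace - M.trace ^ 2 - N.trace ^ 2 = 0 := by
  rw [adjugate_fin_two] at h'
  have h00 := congrFun (congrFun h' 0) 0
  have h01 := congrFun (congrFun h' 0) 1
  have h10 := congrFun (congrFun h' 1) 0
  have h11 := congrFun (congrFun h' 1) 1
  simp only [mul_apply, Fin.sum_univ_two, of_apply, cons_val_zero, cons_val_one, cons_val', cons_val_fin_one] at h00 h01 h10 h11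
  rw [det_fin_two] at hA hB
  simp only [trace_fin_two, mul_apply, Fin.sum_univ_two]
  generalize M 0 0 = a at *
  generalize M 0 1 = b at *
  generalize M 1 0 = c at *
  generalize M 1 1 = d at *
  generalize N 0 0 = e at *
  generalize N 0 1 = f at *
  generalize N 1 0 = g at *
  generalize N 1 1 = k at *
  have e1 : (a + d) * a = (e + k) * k := by linear_combination h00 + hA - hB
  have e2 : (a + d) * b = -((e + k) * f) := by linear_combination h01
  have e3 : (a + d) * c = -((e + k) * g) := by linear_combination h10
  have e4 : (a + d) * d = (e + k) * e := by linear_combination h11 + hA - hB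
  linear_combination (e + k) * (e * e1 + g * e2 + f * e3 + k * e4) - e1 - e4 + 2 * (e + k) ^ 2 * hB

/-- Every character of the Klein bottle group `⟨s, t | s²t² = 1⟩` satisfies
the cubic `xyz − x² − y² = 0` in the coordinates `x = tr(s)`, `y = tr(t)`,
`z = tr(st)`. -/
theorem klein_character_cubic
    (A B : Matrix.SpecialLinearGroup (Fin 2) ℂ) (hrel : A ^ 2 * B ^ 2 = 1) :
    tr A * tr B * tr (A * B) - tr A ^ 2 - tr B ^ 2 = 0 := by
  have h : A * A = (B * B)⁻¹ := by
    rw [← pow_two, ← pow_two]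
    exact eq_inv_of_mul_eq_one_left hrel
  exact cubic_of_matrices A.1 B.1 A.2 B.2 (congrArg Subtype.val h)
end

section
/- Let A, B ∈ SL(2,ℂ) satisfy A²B² = I, and suppose the pair (A, B) is reducible (A and B share a common eigenvector in ℂ²). Then either tr(B) = tr(A) and tr(AB) = 2, or tr(B) = −tr(A) and tr(AB) = −2. -/
open Matrix

theorem eigen_charpoly (M : Matrix.SpecialLinearGroup (Fin 2) ℂ) (v : Fin 2 → ℂ) (hv : v ≠ 0)
    (m : ℂ) (h : (M : Matrix (Fin 2) (Fin 2) ℂ).mulVec v = m • v) :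
    m ^ 2 - m * tr M + 1 = 0 := by
  have hd := M.det_coe
  rw [Matrix.det_fin_two] at hd
  have h0 := congrFun h 0
  have h1 := congrFun h 1
  simp only [Matrix.mulVec, dotProduct, Fin.sum_univ_two, Pi.smul_apply, smul_eq_mul] at h0 h1
  unfold tr
  rw [Matrix.trace_fin_two]
  generalize (M : Matrix (Fin 2) (Fin 2) ℂ) 0 0 = p at *
  generalize (M : Matrix (Fin 2) (Fin 2) ℂ) 0 1 = q at *
  generalize (M : Matrix (Fin 2) (Fin 2) ℂ) 1 0 = r at *
  generalize (M : Matrix (Fin 2) (Fin 2) ℂ) 1 1 = s at *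
  have e0 : (m ^ 2 - m * (p + s) + 1) * v 0 = 0 := by
    linear_combination (s - m) * h0 - q * h1 - v 0 * hd
  have e1 : (m ^ 2 - m * (p + s) + 1) * v 1 = 0 := by
    linear_combination (p - m) * h1 - r * h0 - v 1 * hd
  by_contra hne
  apply hv
  funext i
  fin_cases i
  · exact (mul_eq_zero.mp e0).resolve_left hne
  · exact (mul_eq_zero.mp e1).resolve_left hne

/-- If `A²B² = I` in `SL(2, ℂ)` and the pair `(A, B)` is reducible, then
either `tr(B) = tr(A)` and `tr(AB) = 2`, or `tr(B) = −tr(A)` and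
`tr(AB) = −2`. -/
theorem reducible_klein_characters
    (A B : Matrix.SpecialLinearGroup (Fin 2) ℂ)
    (hrel : A ^ 2 * B ^ 2 = 1) (hred : SharesEigenvector A B) :
    (tr B = tr A ∧ tr (A * B) = 2) ∨ (tr B = -tr A ∧ tr (A * B) = -2) := by
  obtain ⟨v, hv, a, b, hA, hB⟩ := hred
  have hAB : ((A * B : Matrix.SpecialLinearGroup (Fin 2) ℂ) :
      Matrix (Fin 2) (Fin 2) ℂ).mulVec v = (a * b) • v := by
    rw [Matrix.SpecialLinearGroup.coe_mul, ← Matrix.mulVec_mulVec, hB, Matrix.mulVec_smul, hA,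
      smul_smul, mul_comm]
  have hr : (A : Matrix (Fin 2) (Fin 2) ℂ) ^ 2 * (B : Matrix (Fin 2) (Fin 2) ℂ) ^ 2 = 1 := by
    have := congrArg (fun M : Matrix.SpecialLinearGroup (Fin 2) ℂ =>
      (M : Matrix (Fin 2) (Fin 2) ℂ)) hrel
    simpa using this
  have hs : ((a * b) ^ 2 - 1) • v = 0 := by
    have h := congrArg (fun M => M.mulVec v) hr
    simp only [pow_two, ← Matrix.mulVec_mulVec, hB, hA, Matrix.mulVec_smul, smul_smul,
      Matrix.one_mulVec] at h
    rw [sub_smul, one_smul, sub_eq_zero]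
    refine Eq.trans ?_ h
    congr 1
    ring
  have hab : (a * b) ^ 2 = 1 := sub_eq_zero.mp ((smul_eq_zero.mp hs).resolve_right hv)
  have cA := eigen_charpoly A v hv a hA
  have cB := eigen_charpoly B v hv b hB
  have cAB := eigen_charpoly (A * B) v hv _ hAB
  have ha : a ≠ 0 := by
    rintro rfl
    simp at hab
  rcases (sq_eq_sq_iff_eq_or_eq_neg.mp (hab.trans (one_pow 2).symm)) with h | h
  · left
    rw [h] at cAB
    refine ⟨mul_left_cancel₀ ha ?_, by linear_combination -cAB⟩
    linear_combination (-a ^ 2) * cB + cA + (a * b + 1 - a * tr B) * h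
  · right
    rw [h] at cAB
    refine ⟨mul_left_cancel₀ ha ?_, by linear_combination cAB⟩
    linear_combination a ^ 2 * cB - cA - (a * b - 1 - a * tr B) * h
end

section
/- Let A, B ∈ SL(2,ℂ) satisfy A²B² = I. If tr(AB) = 2 or tr(AB) = −2, then the pair (A, B) is reducible, i.e., A and B share a common eigenvector in ℂ². -/
open Matrix

lemma ch_two (A : Matrix.SpecialLinearGroup (Fin 2) ℂ) :
    (A : Matrix (Fin 2) (Fin 2) ℂ) * (A : Matrix (Fin 2) (Fin 2) ℂ)
      = tr A • (A : Matrix (Fin 2) (Fin 2) ℂ) - 1 := by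
  have h := A.det_coe
  rw [Matrix.det_fin_two] at h
  ext i j
  fin_cases i <;> fin_cases j <;>
    simp [tr, Matrix.trace_fin_two, Matrix.mul_apply, Fin.sum_univ_two] <;> grind

lemma inv_two (A : Matrix.SpecialLinearGroup (Fin 2) ℂ) :
    ((A⁻¹ : Matrix.SpecialLinearGroup (Fin 2) ℂ) : Matrix (Fin 2) (Fin 2) ℂ)
      = tr A • (1 : Matrix (Fin 2) (Fin 2) ℂ) - (A : Matrix (Fin 2) (Fin 2) ℂ) := by
  rw [Matrix.SpecialLinearGroup.coe_inv, Matrix.adjugate_fin_two]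
  ext i j
  fin_cases i <;> fin_cases j <;> simp [tr, Matrix.trace_fin_two]

lemma exists_eigen (M : Matrix (Fin 2) (Fin 2) ℂ) :
    ∃ (v : Fin 2 → ℂ) (a : ℂ), v ≠ 0 ∧ M.mulVec v = a • v := by
  obtain ⟨a, ha⟩ := Module.End.exists_eigenvalue (Matrix.toLin' M)
  obtain ⟨v, hv⟩ := ha.exists_hasEigenvector
  exact ⟨v, a, hv.2, by simpa using hv.apply_eq_smul⟩

lemma matrix_key (M N : Matrix (Fin 2) (Fin 2) ℂ) (x y e : ℂ)
    (hM0 : M ≠ 0)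
    (hM : M * M = x • M - 1) (hN : N * N = y • N - 1)
    (hxy : x • M = y • (y • (1 : Matrix (Fin 2) (Fin 2) ℂ) - N))
    (hy : y = 0 → M * N + N * M = (2 * e) • (1 : Matrix (Fin 2) (Fin 2) ℂ)) (he : e * e = 1) :
    ∃ v : Fin 2 → ℂ, v ≠ 0 ∧ ∃ a b : ℂ, M.mulVec v = a • v ∧ N.mulVec v = b • v := by
  obtain ⟨v, a, hv, hav⟩ := exists_eigen M
  by_cases hy0 : y = 0
  · have hx0 : x = 0 := by
      subst hy0
      rw [zero_smul] at hxy
      exact (smul_eq_zero.mp hxy).resolve_right hM0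
    have hMN := hy hy0
    subst hx0 hy0
    have haa : (a * a + 1) • v = 0 := by
      have h := congrArg (fun T => T.mulVec v) hM
      simp only [← Matrix.mulVec_mulVec, hav, Matrix.mulVec_smul, Matrix.sub_mulVec,
        Matrix.one_mulVec, zero_smul, Matrix.zero_mulVec] at h
      rw [add_smul, mul_smul, h]; simp
    have haa : a * a = -1 := by
      have := (smul_eq_zero.mp haa).resolve_right hv
      linear_combination this
    have hNN : N.mulVec (N.mulVec v) = -v := by
      rw [Matrix.mulVec_mulVec, hN, Matrix.sub_mulVec, zero_smul, Matrix.zero_mulVec, Matrix.one_mulVec, zero_sub]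
    have hMNv : M.mulVec (N.mulVec v) = (2 * e) • v - a • N.mulVec v := by
      have h := congrArg (fun T => T.mulVec v) hMN
      simp only [Matrix.add_mulVec, ← Matrix.mulVec_mulVec, hav, Matrix.mulVec_smul,
        Matrix.smul_mulVec, Matrix.one_mulVec] at h
      rw [← h]; simp
    by_cases hw : a • v + e • N.mulVec v = 0
    · refine ⟨v, hv, a, -(e * a), hav, ?_⟩
      have h2 : N.mulVec v = (e * e) • N.mulVec v := by rw [he, one_smul]
      rw [h2, mul_smul, eq_neg_of_add_eq_zero_right hw]
      module
    · refine ⟨_, hw, -a, e * a, ?_, ?_⟩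
      · rw [Matrix.mulVec_add, Matrix.mulVec_smul, Matrix.mulVec_smul, hMNv, hav]
        ext i
        simp only [Pi.add_apply, Pi.smul_apply, Pi.sub_apply, smul_eq_mul]
        linear_combination 2 * v i * haa + 2 * v i * he
      · rw [Matrix.mulVec_add, Matrix.mulVec_smul, Matrix.mulVec_smul, hNN]
        ext i
        simp only [Pi.add_apply, Pi.smul_apply, Pi.neg_apply, smul_eq_mul]
        linear_combination - e * v i * haa - a * N.mulVec v i * he
  · refine ⟨v, hv, a, y - x * a / y, hav, ?_⟩
    have h := congrArg (fun T => T.mulVec v) hxy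
    simp only [Matrix.smul_mulVec, Matrix.sub_mulVec, hav, Matrix.one_mulVec] at h
    ext i
    have hi := congrFun h i
    simp only [Pi.smul_apply, Pi.sub_apply, smul_eq_mul] at hi ⊢
    field_simp
    linear_combination hi

/-- If `A²B² = I` in `SL(2, ℂ)` and `tr(AB) = ±2`, then the pair
`(A, B)` is reducible. -/
theorem klein_trace_pm_two_reducible
    (A B : Matrix.SpecialLinearGroup (Fin 2) ℂ)
    (hrel : A ^ 2 * B ^ 2 = 1) (htr : tr (A * B) = 2 ∨ tr (A * B) = -2) :
    SharesEigenvector A B := by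
  obtain ⟨e, he, hte⟩ : ∃ e : ℂ, e * e = 1 ∧ tr (A * B) = 2 * e := by
    rcases htr with h | h
    · exact ⟨1, by norm_num, by rw [h]; norm_num⟩
    · exact ⟨-1, by norm_num, by rw [h]; norm_num⟩
  have hinv : A * A = B⁻¹ * B⁻¹ := by
    have h := eq_inv_of_mul_eq_one_left hrel
    rw [← pow_two, h, pow_two, _root_.mul_inv_rev]
  have hM := ch_two A
  have hN := ch_two B
  have hIB := inv_two B
  have hxy : tr A • (A : Matrix (Fin 2) (Fin 2) ℂ)
      = tr B • (tr B • (1 : Matrix (Fin 2) (Fin 2) ℂ) - (B : Matrix (Fin 2) (Fin 2) ℂ)) := by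
    have h := congrArg (fun T : Matrix.SpecialLinearGroup (Fin 2) ℂ =>
      (T : Matrix (Fin 2) (Fin 2) ℂ)) hinv
    simp only [Matrix.SpecialLinearGroup.coe_mul] at h
    rw [hM, hIB, sub_mul, mul_sub, mul_sub, hN] at h
    simp only [smul_mul_assoc, mul_smul_comm, one_mul, mul_one] at h
    rw [sub_eq_iff_eq_add.mp h]
    module
  have hA0 : (A : Matrix (Fin 2) (Fin 2) ℂ) ≠ 0 := by
    intro h
    have hd := A.det_coe
    rw [h] at hd
    simp at hd
  refine matrix_key _ _ (tr A) (tr B) e hA0 hM hN hxy ?_ he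
  intro hy
  have hx : tr A = 0 := by
    rw [hy, zero_smul] at hxy
    exact (smul_eq_zero.mp hxy).resolve_right hA0
  have h1 := inv_two (A * B)
  have h2 := inv_two A
  rw [_root_.mul_inv_rev, Matrix.SpecialLinearGroup.coe_mul, hIB, h2, hx, hy, hte,
    Matrix.SpecialLinearGroup.coe_mul] at h1
  simp only [zero_smul, zero_sub, neg_mul_neg] at h1
  rw [h1]
  abel
end

section
/- Let A, B ∈ SL(2,ℂ) satisfy A²B² = I. If tr(AB) ∈ {2, −2} and tr(A²) ∈ {2, −2}, then the triple (tr(A), tr(B), tr(AB)) is one of the six points (0,0,2), (0,0,−2), (2,2,2), (−2,−2,2), (2,−2,−2), (−2,2,−2). -/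
open Matrix

theorem tr_eq (A : Matrix.SpecialLinearGroup (Fin 2) ℂ) : tr A = A.1 0 0 + A.1 1 1 := by
  simp [tr, Matrix.trace_fin_two]

theorem tr_inv' (B : Matrix.SpecialLinearGroup (Fin 2) ℂ) : tr B⁻¹ = tr B := by
  simp [tr, Matrix.SpecialLinearGroup.coe_inv, Matrix.adjugate_fin_two, Matrix.trace_fin_two,
    add_comm]

theorem tr_sq' (A : Matrix.SpecialLinearGroup (Fin 2) ℂ) : tr (A ^ 2) = tr A ^ 2 - 2 := by
  have hd := A.2
  rw [Matrix.det_fin_two] at hd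
  simp only [tr, pow_two, Matrix.SpecialLinearGroup.coe_mul, Matrix.trace_fin_two,
    Matrix.mul_apply, Fin.sum_univ_two]
  linear_combination (-2) * hd

theorem tr_sq_mul' (A B : Matrix.SpecialLinearGroup (Fin 2) ℂ) :
    tr (A ^ 2 * B) = tr A * tr (A * B) - tr B := by
  have hd := A.2
  rw [Matrix.det_fin_two] at hd
  simp only [tr, pow_two, Matrix.SpecialLinearGroup.coe_mul, Matrix.trace_fin_two,
    Matrix.mul_apply, Fin.sum_univ_two]
  linear_combination (-(B.1 0 0 + B.1 1 1)) * hd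

/-- If `A²B² = I` in `SL(2, ℂ)`, `tr(AB) = ±2` and `tr(A²) = ±2`, then
`(tr(A), tr(B), tr(AB))` is one of the six points `(0,0,±2)`,
`(±2, ±2, ±2)` with an even number of negative signs. -/
theorem klein_boundary_trace_classification
    (A B : Matrix.SpecialLinearGroup (Fin 2) ℂ)
    (hrel : A ^ 2 * B ^ 2 = 1)
    (h1 : tr (A * B) = 2 ∨ tr (A * B) = -2)
    (h2 : tr (A ^ 2) = 2 ∨ tr (A ^ 2) = -2) :
    (tr A, tr B, tr (A * B)) ∈
      ({(0, 0, 2), (0, 0, -2), (2, 2, 2), (-2, -2, 2), (2, -2, -2), (-2, 2, -2)} :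
        Set (ℂ × ℂ × ℂ)) := by
  have e : A ^ 2 * B = B⁻¹ := by
    rw [eq_inv_iff_mul_eq_one, mul_assoc, ← pow_two, hrel]
  have hk := tr_sq_mul' A B
  rw [e, tr_inv'] at hk
  rw [tr_sq'] at h2
  have hx : tr A = 0 ∨ tr A = 2 ∨ tr A = -2 := by
    rcases h2 with h | h
    · right
      have : (tr A - 2) * (tr A + 2) = 0 := by linear_combination h
      rcases mul_eq_zero.mp this with h | h
      · left; linear_combination h
      · right; linear_combination h
    · left
      have : tr A ^ 2 = 0 := by linear_combination h
      exact pow_eq_zero_iff (two_ne_zero) |>.mp this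
  have hy : tr B = tr A * tr (A * B) / 2 := by linear_combination hk / 2
  rw [hy]
  rcases hx with hx | hx | hx <;> rcases h1 with hz | hz <;> rw [hx, hz] <;> norm_num
end

section
/- Let G be a group and let ρ₁, ρ₂ : G → SL(2,ℂ) be group homomorphisms with equal characters, i.e., tr(ρ₁(g)) = tr(ρ₂(g)) for all g ∈ G. If ρ₁ is irreducible, meaning there is no nonzero vector v ∈ ℂ² such that ρ₁(g)·v ∈ ℂ·v for all g ∈ G, then ρ₁ and ρ₂ are conjugate: there exists an invertible 2×2 complex matrix P with ρ₂(g) = P·ρ₁(g)·P⁻¹ for all g ∈ G. -/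
open Matrix

/-- A homomorphism `ρ : G → SL(2, ℂ)` is irreducible if no line in `ℂ²`
is invariant under every `ρ(g)`. -/
def IsIrreducibleRep {G : Type*} [Group G]
    (ρ : G →* Matrix.SpecialLinearGroup (Fin 2) ℂ) : Prop :=
  ¬ ∃ v : Fin 2 → ℂ, v ≠ 0 ∧
      ∀ g : G, ∃ c : ℂ, ((ρ g : Matrix (Fin 2) (Fin 2) ℂ)).mulVec v = c • v

/-- Burnside's theorem for subalgebras of endomorphisms of `ℂ²`. -/
theorem burnside_two {V : Type*} [AddCommGroup V] [Module ℂ V] [FiniteDimensional ℂ V]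
    (hV : Module.finrank ℂ V = 2) (S : Subalgebra ℂ (Module.End ℂ V))
    (h : ∀ v : V, v ≠ 0 → ∃ s ∈ S, ∀ c : ℂ, s v ≠ c • v) : S = ⊤ := by
  classical
  have : Nontrivial V := Module.nontrivial_of_finrank_pos (R := ℂ) (by omega)
  have hs : IsSimpleModule S V := by
    rw [isSimpleModule_iff]
    refine { exists_pair_ne := ⟨⊥, ⊤, bot_ne_top⟩, eq_bot_or_eq_top := ?_ }
    intro N
    by_contra! hN
    obtain ⟨hb, ht⟩ := hN
    obtain ⟨v, hvN, hv⟩ := N.ne_bot_iff.mp hb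
    obtain ⟨s, hsS, hsv⟩ := h v hv
    let N' : Submodule ℂ V := N.restrictScalars ℂ
    have hN't : N' ≠ ⊤ := by
      intro hh
      apply ht
      rw [eq_top_iff]
      intro x _
      have : x ∈ N' := by rw [hh]; trivial
      exact this
    have hlt : Module.finrank ℂ N' < 2 := by
      simpa [hV] using Submodule.finrank_lt hN't
    let v' : N' := ⟨v, hvN⟩
    have hv' : v' ≠ 0 := fun hh => hv (congrArg Subtype.val hh)
    have : Nontrivial N' := ⟨v', 0, hv'⟩
    have hpos : 0 < Module.finrank ℂ N' := Module.finrank_pos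
    have h1 : Module.finrank ℂ N' = 1 := by omega
    have hmem : s v ∈ N' := N.smul_mem ⟨s, hsS⟩ hvN
    obtain ⟨c, hc⟩ := (finrank_eq_one_iff_of_nonzero' v' hv').mp h1 ⟨s v, hmem⟩
    exact hsv c (congrArg Subtype.val hc).symm
  have hbij : Function.Bijective (algebraMap ℂ (Module.End S V)) :=
    IsSimpleModule.algebraMap_end_bijective_of_isAlgClosed ℂ
  rw [eq_top_iff]
  intro f _
  let f' : Module.End (Module.End S V) V :=
    { toFun := f
      map_add' := f.map_add
      map_smul' := by
        intro e x
        obtain ⟨c, rfl⟩ := hbij.2 e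
        simp }
  obtain ⟨r, hr⟩ := jacobson_density (R := S) f'
    (Finset.univ.image fun i => Module.finBasis ℂ V i)
  have : f = r.1 := by
    apply (Module.finBasis ℂ V).ext
    intro i
    exact hr _ (Finset.mem_image_of_mem _ (Finset.mem_univ i))
  rw [this]
  exact r.2

/-- The group algebra homomorphism attached to a representation. -/
noncomputable def repAlgHom {G : Type*} [Group G]
    (ρ : G →* Matrix.SpecialLinearGroup (Fin 2) ℂ) :
    MonoidAlgebra ℂ G →ₐ[ℂ] Module.End ℂ (Fin 2 → ℂ) :=
  MonoidAlgebra.lift ℂ (Module.End ℂ (Fin 2 → ℂ)) G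
    { toFun := fun g => Matrix.toLin' (ρ g : Matrix (Fin 2) (Fin 2) ℂ)
      map_one' := by simp [Module.End.one_eq_id]
      map_mul' := by intro a b; simp [Matrix.toLin'_mul, Module.End.mul_eq_comp] }

theorem repAlgHom_of {G : Type*} [Group G]
    (ρ : G →* Matrix.SpecialLinearGroup (Fin 2) ℂ) (g : G) :
    repAlgHom ρ (MonoidAlgebra.of ℂ G g) =
      Matrix.toLin' (ρ g : Matrix (Fin 2) (Fin 2) ℂ) := by
  simp [repAlgHom]

theorem trace_nondeg (f : Module.End ℂ (Fin 2 → ℂ))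
    (h : ∀ b, LinearMap.trace ℂ (Fin 2 → ℂ) (f * b) = 0) : f = 0 := by
  have key : LinearMap.toMatrix' f = 0 := by
    apply Matrix.ext_iff_trace_mul_right.mpr
    intro x
    have := h (Matrix.toLin' x)
    rw [LinearMap.trace_eq_matrix_trace ℂ (Pi.basisFun ℂ (Fin 2)),
      LinearMap.toMatrix_eq_toMatrix', Module.End.mul_eq_comp, LinearMap.toMatrix'_comp,
      LinearMap.toMatrix'_toLin'] at this
    simpa using this
  simpa using key

/-- An irreducible `SL(2, ℂ)`-representation is determined up to conjugacy
by its character: if `ρ₁` is irreducible and `tr(ρ₁(g)) = tr(ρ₂(g))` for all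
`g`, then `ρ₂` is conjugate to `ρ₁`. -/
theorem irreducible_rep_conj_of_eq_character {G : Type*} [Group G]
    (ρ₁ ρ₂ : G →* Matrix.SpecialLinearGroup (Fin 2) ℂ)
    (htr : ∀ g : G, Matrix.trace (ρ₁ g : Matrix (Fin 2) (Fin 2) ℂ) =
      Matrix.trace (ρ₂ g : Matrix (Fin 2) (Fin 2) ℂ))
    (hirr : IsIrreducibleRep ρ₁) :
    ∃ P : Matrix (Fin 2) (Fin 2) ℂ, IsUnit P ∧
      ∀ g : G, (ρ₂ g : Matrix (Fin 2) (Fin 2) ℂ) =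
        P * (ρ₁ g : Matrix (Fin 2) (Fin 2) ℂ) * P⁻¹ := by
  have hsurj₁ : Function.Surjective (repAlgHom ρ₁) := by
    rw [← AlgHom.range_eq_top]
    apply burnside_two (by simp)
    intro v hv
    by_contra! hcon
    apply hirr
    refine ⟨v, hv, fun g => ?_⟩
    obtain ⟨c, hc⟩ := hcon _ ⟨MonoidAlgebra.of ℂ G g, rfl⟩
    refine ⟨c, ?_⟩
    rw [← hc]
    simp [repAlgHom_of, -MonoidAlgebra.of_apply]
  have htrA : ∀ a, LinearMap.trace ℂ (Fin 2 → ℂ) (repAlgHom ρ₁ a) =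
      LinearMap.trace ℂ (Fin 2 → ℂ) (repAlgHom ρ₂ a) := by
    intro a
    induction a using MonoidAlgebra.induction_on with
    | of g =>
      rw [repAlgHom_of, repAlgHom_of, Matrix.trace_toLin'_eq, Matrix.trace_toLin'_eq, htr]
    | add a b ha hb => simp [ha, hb]
    | smul r a ha => simp [ha]
  have hker : ∀ a, repAlgHom ρ₂ a = 0 → repAlgHom ρ₁ a = 0 := by
    intro a ha
    apply trace_nondeg
    intro b
    obtain ⟨b, rfl⟩ := hsurj₁ b
    rw [← map_mul, htrA, map_mul, ha]
    simp
  obtain ⟨s, hs⟩ := (repAlgHom ρ₁).toLinearMap.exists_rightInverse_of_surjective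
    (LinearMap.range_eq_top.mpr hsurj₁)
  have hs' : ∀ x, repAlgHom ρ₁ (s x) = x := fun x => LinearMap.congr_fun hs x
  let σ : Module.End ℂ (Fin 2 → ℂ) →ₗ[ℂ] Module.End ℂ (Fin 2 → ℂ) :=
    (repAlgHom ρ₂).toLinearMap ∘ₗ s
  have hσi : Function.Injective σ := by
    rw [injective_iff_map_eq_zero]
    intro x hx
    rw [← hs' x]
    exact hker _ hx
  have hσs : Function.Surjective σ := LinearMap.injective_iff_surjective.mp hσi
  have hsurj₂ : Function.Surjective (repAlgHom ρ₂) := by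
    intro y
    obtain ⟨x, hx⟩ := hσs y
    exact ⟨s x, hx⟩
  have hker' : ∀ a, repAlgHom ρ₁ a = 0 → repAlgHom ρ₂ a = 0 := by
    intro a ha
    apply trace_nondeg
    intro b
    obtain ⟨b, rfl⟩ := hsurj₂ b
    rw [← map_mul, ← htrA, map_mul, ha]
    simp
  have hσ' : ∀ a, σ (repAlgHom ρ₁ a) = repAlgHom ρ₂ a := by
    intro a
    have := hker' (s (repAlgHom ρ₁ a) - a) (by rw [map_sub, hs', sub_self])
    rw [map_sub, sub_eq_zero] at this
    exact this
  have hσ1 : σ 1 = 1 := by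
    have := hσ' 1
    rwa [map_one (repAlgHom ρ₁), map_one (repAlgHom ρ₂)] at this
  have hσm : ∀ x y, σ (x * y) = σ x * σ y := by
    intro x y
    obtain ⟨a, rfl⟩ := hsurj₁ x
    obtain ⟨b, rfl⟩ := hsurj₁ y
    rw [← map_mul, hσ', hσ', hσ', map_mul]
  let τ : Module.End ℂ (Fin 2 → ℂ) ≃ₐ[ℂ] Module.End ℂ (Fin 2 → ℂ) :=
    AlgEquiv.ofBijective (AlgHom.ofLinearMap σ hσ1 hσm) ⟨hσi, hσs⟩
  obtain ⟨T, hT⟩ := τ.eq_linearEquivConjAlgEquiv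
  have hTT : LinearMap.toMatrix' (T : (Fin 2 → ℂ) →ₗ[ℂ] (Fin 2 → ℂ)) *
      LinearMap.toMatrix' (T.symm : (Fin 2 → ℂ) →ₗ[ℂ] (Fin 2 → ℂ)) = 1 := by
    rw [← LinearMap.toMatrix'_comp]
    simp
  refine ⟨LinearMap.toMatrix' (T : (Fin 2 → ℂ) →ₗ[ℂ] (Fin 2 → ℂ)),
    IsUnit.of_mul_eq_one _ hTT, fun g => ?_⟩
  rw [Matrix.inv_eq_right_inv hTT]
  have h2 : τ (repAlgHom ρ₁ (MonoidAlgebra.of ℂ G g)) =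
    repAlgHom ρ₂ (MonoidAlgebra.of ℂ G g) := hσ' _
  rw [hT, repAlgHom_of, repAlgHom_of, LinearEquiv.conjAlgEquiv_apply] at h2
  have h3 := congrArg LinearMap.toMatrix' h2
  rw [LinearMap.toMatrix'_toLin', LinearMap.toMatrix'_comp, LinearMap.toMatrix'_comp,
    LinearMap.toMatrix'_toLin'] at h3
  rw [← h3, Matrix.mul_assoc]
end

section
/- Let A, B, A', B' ∈ SL(2,ℂ) satisfy A²B² = I and A'²B'² = I, suppose both pairs (A, B) and (A', B') are irreducible (each pair has no common eigenvector in ℂ²), and suppose tr(AB) = tr(A'B'). Then the pairs are simultaneously conjugate: there exists an invertible 2×2 complex matrix P with A' = P·A·P⁻¹ and B' = P·B·P⁻¹. -/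
open Matrix

lemma kl_exists_root (z : ℂ) : ∃ l : ℂ, l ^ 2 - z * l + 1 = 0 := by
  obtain ⟨d, hd⟩ := IsAlgClosed.exists_eq_mul_self (z ^ 2 - 4)
  exact ⟨(z + d) / 2, by linear_combination (-1 / 4) * hd⟩

lemma kl_eig (M : Matrix (Fin 2) (Fin 2) ℂ) (l : ℂ) (hd : M.det = 1)
    (h : l ^ 2 - M.trace * l + 1 = 0) : ∃ v : Fin 2 → ℂ, v ≠ 0 ∧ M *ᵥ v = l • v := by
  have h0 : (M - l • (1 : Matrix (Fin 2) (Fin 2) ℂ)).det = 0 := by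
    rw [Matrix.det_fin_two] at hd ⊢
    rw [Matrix.trace_fin_two] at h
    simp
    linear_combination h + hd
  obtain ⟨v, hv, hv'⟩ := Matrix.exists_mulVec_eq_zero_iff.mpr h0
  refine ⟨v, hv, ?_⟩
  rw [Matrix.sub_mulVec, Matrix.smul_mulVec, Matrix.one_mulVec] at hv'
  exact sub_eq_zero.mp hv'

lemma kl_ch (M : Matrix (Fin 2) (Fin 2) ℂ) (hd : M.det = 1) :
    M * M = M.trace • M - 1 := by
  rw [Matrix.det_fin_two] at hd
  ext i j
  fin_cases i <;> fin_cases j <;> simp [Matrix.mul_apply, Matrix.trace_fin_two] <;>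
    first | ring1 | linear_combination -hd

/-- If `t M + s N` is scalar with `t ≠ 0`, then `M` and `N` share an eigenvector. -/
lemma kl_share (M N : Matrix (Fin 2) (Fin 2) ℂ) (hd : N.det = 1) (t s c : ℂ) (ht : t ≠ 0)
    (h : t • M + s • N = c • (1 : Matrix (Fin 2) (Fin 2) ℂ)) :
    ∃ v : Fin 2 → ℂ, v ≠ 0 ∧ ∃ a b : ℂ, M *ᵥ v = a • v ∧ N *ᵥ v = b • v := by
  obtain ⟨l, hl⟩ := kl_exists_root N.trace
  obtain ⟨v, hv, hv'⟩ := kl_eig N l hd hl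
  refine ⟨v, hv, t⁻¹ * (c - s * l), l, ?_, hv'⟩
  have h1 := congrArg (fun X => X *ᵥ v) h
  simp only [Matrix.add_mulVec, Matrix.smul_mulVec, Matrix.one_mulVec, hv'] at h1
  have h2 : t • (M *ᵥ v) = (c - s * l) • v := by
    rw [eq_sub_of_add_eq h1, sub_smul, smul_smul]
  rw [mul_smul, ← h2, smul_smul, inv_mul_cancel₀ ht, one_smul]

lemma kl_normal (A B : Matrix.SpecialLinearGroup (Fin 2) ℂ) (hrel : A ^ 2 * B ^ 2 = 1)
    (hirr : ¬ SharesEigenvector A B) (l : ℂ) (hl : l ^ 2 - tr (A * B) * l + 1 = 0) :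
    ∃ Q : Matrix (Fin 2) (Fin 2) ℂ, IsUnit Q.det ∧
      (A : Matrix (Fin 2) (Fin 2) ℂ) * Q = Q * !![0, -1; 1, 0] ∧
      (B : Matrix (Fin 2) (Fin 2) ℂ) * Q = Q * !![0, l⁻¹; -l, 0] := by
  rw [pow_two, pow_two] at hrel
  obtain ⟨M, hM⟩ := A
  obtain ⟨N, hN⟩ := B
  have hr : M * M * (N * N) = 1 := by
    have := congrArg (fun X : Matrix.SpecialLinearGroup (Fin 2) ℂ =>
      (X : Matrix (Fin 2) (Fin 2) ℂ)) hrel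
    exact this
  have hirr' : ¬ ∃ v : Fin 2 → ℂ, v ≠ 0 ∧ ∃ a b : ℂ, M *ᵥ v = a • v ∧ N *ᵥ v = b • v := hirr
  have hl' : l ^ 2 - (M * N).trace * l + 1 = 0 := hl
  have cM := kl_ch M hM
  have cN := kl_ch N hN
  have hlin : M.trace • M + N.trace • N = (N.trace ^ 2) • (1 : Matrix (Fin 2) (Fin 2) ℂ) := by
    have hinv : N * (N.trace • 1 - N) = 1 := by
      rw [mul_sub, cN]; simp
    have h1 : M * M = (N.trace • 1 - N) * (N.trace • 1 - N) := by
      calc M * M = M * M * (N * (N * (N.trace • 1 - N)) * (N.trace • 1 - N)) := by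
            rw [hinv, mul_one, hinv, mul_one]
        _ = (M * M * (N * N)) * ((N.trace • 1 - N) * (N.trace • 1 - N)) := by
            simp only [mul_assoc]
        _ = _ := by rw [hr, one_mul]
    have h2 : (N.trace • 1 - N) * (N.trace • 1 - N)
        = (N.trace ^ 2) • (1 : Matrix (Fin 2) (Fin 2) ℂ) - N.trace • N - 1 := by
      rw [sub_mul, hinv]
      simp [mul_sub, smul_smul, pow_two]
    rw [h2, cM] at h1
    have h3 := sub_left_injective h1
    rw [h3, sub_add_cancel]
  have tM : M.trace = 0 := by
    by_contra ht
    exact hirr' (kl_share M N hN _ _ _ ht hlin)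
  have tN : N.trace = 0 := by
    by_contra ht
    obtain ⟨v, hv, a, b, h1, h2⟩ := kl_share N M hM _ _ _ ht ((add_comm _ _).trans hlin)
    exact hirr' ⟨v, hv, b, a, h2, h1⟩
  rw [tM, zero_smul, zero_sub] at cM
  rw [tN, zero_smul, zero_sub] at cN
  have l0 : l ≠ 0 := by
    rintro rfl
    simp at hl'
  obtain ⟨v, hv, hv'⟩ := kl_eig (M * N) l (by rw [Matrix.det_mul, hM, hN, one_mul]) hl'
  have hMw : M *ᵥ (M *ᵥ v) = -v := by
    rw [Matrix.mulVec_mulVec, cM, Matrix.neg_mulVec, Matrix.one_mulVec]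
  have hNv : N *ᵥ v = (-l) • (M *ᵥ v) := by
    have h1 : M *ᵥ ((M * N) *ᵥ v) = -(N *ᵥ v) := by
      rw [Matrix.mulVec_mulVec, ← mul_assoc, cM, neg_one_mul, Matrix.neg_mulVec]
    rw [hv', Matrix.mulVec_smul] at h1
    rw [neg_smul, h1, neg_neg]
  have hNw : N *ᵥ (M *ᵥ v) = l⁻¹ • v := by
    have h1 : N *ᵥ (N *ᵥ v) = -v := by
      rw [Matrix.mulVec_mulVec, cN, Matrix.neg_mulVec, Matrix.one_mulVec]
    rw [hNv, Matrix.mulVec_smul, neg_smul, neg_inj] at h1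
    exact (eq_inv_smul_iff₀ l0).mpr h1
  set w := M *ᵥ v with hw
  refine ⟨!![v 0, w 0; v 1, w 1], ?_, ?_, ?_⟩
  · rw [isUnit_iff_ne_zero]
    intro h0
    rw [Matrix.det_fin_two_of] at h0
    apply hirr'
    have hc : ∃ c : ℂ, w = c • v := by
      by_cases h : v 0 = 0
      · have h1 : v 1 ≠ 0 := by
          intro h1
          apply hv
          ext i
          fin_cases i <;> simp [h, h1]
        refine ⟨w 1 / v 1, ?_⟩
        ext i
        fin_cases i <;> simp <;> field_simp
        linear_combination -h0
      · refine ⟨w 0 / v 0, ?_⟩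
        ext i
        fin_cases i <;> simp <;> field_simp
        linear_combination h0
    obtain ⟨c, hc⟩ := hc
    exact ⟨v, hv, c, -l * c, hc, by rw [hNv, hc, smul_smul]⟩
  · have a0 := congrFun hw 0
    have a1 := congrFun hw 1
    have b0 := congrFun hMw 0
    have b1 := congrFun hMw 1
    simp [Matrix.mulVec, dotProduct, Fin.sum_univ_two] at a0 a1 b0 b1
    clear_value w
    ext i j
    fin_cases i <;> fin_cases j <;> simp [Matrix.mul_apply, Fin.sum_univ_two]
    · exact a0.symm
    · exact b0
    · exact a1.symm
    · exact b1
  · have a0 := congrFun hNv 0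
    have a1 := congrFun hNv 1
    have b0 := congrFun hNw 0
    have b1 := congrFun hNw 1
    clear_value w
    simp [Matrix.mulVec, dotProduct, Fin.sum_univ_two] at a0 a1 b0 b1
    ext i j
    fin_cases i <;> fin_cases j <;> simp [Matrix.mul_apply, Fin.sum_univ_two] 
    · linear_combination a0
    · linear_combination b0
    · linear_combination a1
    · linear_combination b1

lemma kl_conj (M M' Q Q' D : Matrix (Fin 2) (Fin 2) ℂ) (hQ : IsUnit Q.det) (hQ' : IsUnit Q'.det)
    (h : M * Q = Q * D) (h' : M' * Q' = Q' * D) :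
    M' = (Q' * Q⁻¹) * M * (Q' * Q⁻¹)⁻¹ := by
  have e : M = Q * D * Q⁻¹ := by rw [← h, Matrix.mul_nonsing_inv_cancel_right _ _ hQ]
  have e' : M' = Q' * D * Q'⁻¹ := by rw [← h', Matrix.mul_nonsing_inv_cancel_right _ _ hQ']
  rw [e, e', Matrix.mul_inv_rev, Matrix.nonsing_inv_nonsing_inv _ hQ]
  simp only [mul_assoc]
  rw [Matrix.nonsing_inv_mul_cancel_left _ _ hQ, Matrix.nonsing_inv_mul_cancel_left _ _ hQ]

/-- An irreducible representation of the Klein bottle group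
`⟨s, t | s²t² = 1⟩` is determined up to conjugacy by `tr(st)`. -/
theorem irreducible_klein_conj_of_eq_trace
    (A B A' B' : Matrix.SpecialLinearGroup (Fin 2) ℂ)
    (hrel : A ^ 2 * B ^ 2 = 1) (hrel' : A' ^ 2 * B' ^ 2 = 1)
    (hirr : ¬ SharesEigenvector A B) (hirr' : ¬ SharesEigenvector A' B')
    (htr : tr (A * B) = tr (A' * B')) :
    ∃ P : Matrix (Fin 2) (Fin 2) ℂ, IsUnit P ∧
      (A' : Matrix (Fin 2) (Fin 2) ℂ) = P * (A : Matrix (Fin 2) (Fin 2) ℂ) * P⁻¹ ∧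
      (B' : Matrix (Fin 2) (Fin 2) ℂ) = P * (B : Matrix (Fin 2) (Fin 2) ℂ) * P⁻¹ := by
  obtain ⟨l, hl⟩ := kl_exists_root (tr (A * B))
  obtain ⟨Q, hQ, h1, h2⟩ := kl_normal A B hrel hirr l hl
  obtain ⟨Q', hQ', h1', h2'⟩ := kl_normal A' B' hrel' hirr' l (by rw [← htr]; exact hl)
  refine ⟨Q' * Q⁻¹, ?_, kl_conj _ _ _ _ _ hQ hQ' h1 h1', kl_conj _ _ _ _ _ hQ hQ' h2 h2'⟩
  rw [Matrix.isUnit_iff_isUnit_det, Matrix.det_mul]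
  exact hQ'.mul (Matrix.isUnit_nonsing_inv_det _ hQ)
end
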